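/- For every Σ-labeled rooted ordered unranked tree T with n ≥ 2 nodes there exists a forest-algebra formula Ψ over Σ that evaluates to T, has exactly n leaves, and whose parse tree has height at most 10·log₂(n). -/

import Mathlib

/-! ### Forests, trees and contexts over an alphabet `σ`.

A forest is an ordered list of labeled unranked trees; a context is a
forest with a single hole at a leaf position. -/

mutual
/-- A `σ`-labeled rooted ordered unranked tree. -/
inductive FTree (σ : Type) : Type
  | node : σ → FForest σ → FTree σ

/-- A `σ`-labeled forest: an ordered (possibly empty) list of trees. -/
inductive FForest (σ : Type) : Type
  | nil : FForest σ
  | cons : FTree σ → FForest σ → FForest σ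
end

/-- Horizontal concatenation of forests (`⊕` on two forests). -/
def FForest.append {σ : Type} : FForest σ → FForest σ → FForest σ
  | .nil, G => G
  | .cons t F, G => .cons t (F.append G)

/-- A `σ`-labeled context: a forest with exactly one hole `□` at a leaf position.
`hole L R` is the context `L ⊕ □ ⊕ R`; `node L a C R` is the context
`L ⊕ a⟨C⟩ ⊕ R` where `a⟨C⟩` is the tree with `a`-labeled root whose
children form the context `C`. -/
inductive FCtx (σ : Type) : Type
  | hole : FForest σ → FForest σ → FCtx σ
  | node : FForest σ → σ → FCtx σ → FForest σ → FCtx σ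

/-- `F ⊕ C` for a forest `F` and a context `C` (the monoidal action ⊕_HV). -/
def FCtx.hvOp {σ : Type} (F : FForest σ) : FCtx σ → FCtx σ
  | .hole L R => .hole (F.append L) R
  | .node L a C R => .node (F.append L) a C R

/-- `C ⊕ F` for a context `C` and a forest `F` (the monoidal action ⊕_VH). -/
def FCtx.vhOp {σ : Type} : FCtx σ → FForest σ → FCtx σ
  | .hole L R, G => .hole L (R.append G)
  | .node L a C R, G => .node L a C (R.append G)

/-- `C ⊙ D` for contexts `C, D`: replace the hole of `C` by `D` (⊙_VV). -/
def FCtx.vvOp {σ : Type} : FCtx σ → FCtx σ → FCtx σ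
  | .hole L R, D => FCtx.hvOp L (FCtx.vhOp D R)
  | .node L a C R, D => .node L a (C.vvOp D) R

/-- `C ⊙ F` for a context `C` and a forest `F`: replace the hole of `C`
by the roots of `F` (⊙_VH). -/
def FCtx.plug {σ : Type} : FCtx σ → FForest σ → FForest σ
  | .hole L R, G => L.append (G.append R)
  | .node L a C R, G => L.append (.cons (.node a (C.plug G)) R)

/-- The empty forest ε. -/
def FForest.eps (σ : Type) : FForest σ := .nil

/-- The context □ consisting solely of the hole. -/
def FCtx.box (σ : Type) : FCtx σ := .hole .nil .nil
/-! ### Forest-algebra formulas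

A forest-algebra formula is a binary parse tree whose inner nodes are
labeled by one of the five forest-algebra operations and whose leaves are
labeled by a symbol `a` (a single-node forest, constructor `fa`) or `a_□`
(the context with a single `a`-labeled root whose only child is the hole,
constructor `ca`).  The two leaf-label types `α` and `β` are kept separate
so that leaves may carry extra decorations. -/

/-- The five forest-algebra operations: `⊕_HH`, `⊕_HV`, `⊕_VH`, `⊙_VV`,
`⊙_VH`. -/
inductive FAOp : Type
  | hh | hv | vh | vv | vhd
deriving DecidableEq

inductive Formula (α β : Type) : Type
  | fa : α → Formula α β
  | ca : β → Formula α β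
  | node : FAOp → Formula α β → Formula α β → Formula α β

namespace Formula

variable {α β : Type}

/-- The height of (the parse tree of) a formula. -/
def height : Formula α β → ℕ
  | fa _ => 1
  | ca _ => 1
  | node _ l r => 1 + max l.height r.height

/-- The number of leaves of a formula. -/
def numLeaves : Formula α β → ℕ
  | fa _ => 1
  | ca _ => 1
  | node _ l r => l.numLeaves + r.numLeaves

/-- `balance(v)`: height of the right subformula minus height of the left
subformula (0 for leaves). -/
def bal : Formula α β → ℤ
  | node _ l r => (r.height : ℤ) - (l.height : ℤ)
  | _ => 0

/-- The absolute balance. -/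
def abal (t : Formula α β) : ℤ := |t.bal|

/-- The sort of a (sub)formula: `true` if it denotes a forest,
`false` if it denotes a context. -/
def sort : Formula α β → Bool
  | fa _ => true
  | ca _ => false
  | node .hh _ _ => true
  | node .vhd _ _ => true
  | node _ _ _ => false

/-- Well-typedness of a formula: the operands of each operation have the
required sorts. -/
def WT : Formula α β → Prop
  | fa _ => True
  | ca _ => True
  | node .hh l r => l.sort = true ∧ r.sort = true ∧ WT l ∧ WT r
  | node .hv l r => l.sort = true ∧ r.sort = false ∧ WT l ∧ WT r
  | node .vh l r => l.sort = false ∧ r.sort = true ∧ WT l ∧ WT r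
  | node .vv l r => l.sort = false ∧ r.sort = false ∧ WT l ∧ WT r
  | node .vhd l r => l.sort = false ∧ r.sort = true ∧ WT l ∧ WT r

/-- `IsSubformula t s`: `t` is the subformula of `s` rooted at some node. -/
inductive IsSubformula : Formula α β → Formula α β → Prop
  | refl (t : Formula α β) : IsSubformula t t
  | left {t l r} {op : FAOp} : IsSubformula t l → IsSubformula t (node op l r)
  | right {t l r} {op : FAOp} : IsSubformula t r → IsSubformula t (node op l r)

/-- The long path `lp(v)` of (the subformula rooted at) `v`, as the list of
subformulas rooted at its nodes: it stops at the first node of balance 0 and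
otherwise continues into the strictly deeper subformula. -/
def lpList : Formula α β → List (Formula α β)
  | node op l r =>
    if l.height = r.height then [node op l r]
    else if l.height < r.height then node op l r :: lpList r
    else node op l r :: lpList l
  | t => [t]

end Formula

mutual
/-- The number of nodes of a tree. -/
def FTree.size {σ : Type} : FTree σ → ℕ
  | .node _ F => 1 + F.size

/-- The number of nodes of a forest. -/
def FForest.size {σ : Type} : FForest σ → ℕ
  | .nil => 0
  | .cons t F => t.size + F.size
end

/-- Evaluation of a forest-algebra formula over `σ` to the forest
(`Sum.inl`) or context (`Sum.inr`) it represents; `none` if the formula is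
not well typed.  A leaf `fa a` denotes the single-node forest labeled `a`,
and a leaf `ca a` denotes the context `a_□` whose `a`-labeled root has the
hole as its only child. -/
def Formula.evalFree {σ : Type} : Formula σ σ → Option (FForest σ ⊕ FCtx σ)
  | .fa a => some (.inl (.cons (.node a .nil) .nil))
  | .ca a => some (.inr (.node .nil a (.hole .nil .nil) .nil))
  | .node op l r =>
    match l.evalFree, r.evalFree, op with
    | some (.inl F1), some (.inl F2), .hh => some (.inl (F1.append F2))
    | some (.inl F), some (.inr C), .hv => some (.inr (FCtx.hvOp F C))
    | some (.inr C), some (.inl F), .vh => some (.inr (FCtx.vhOp C F))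
    | some (.inr C1), some (.inr C2), .vv => some (.inr (C1.vvOp C2))
    | some (.inr C), some (.inl F), .vhd => some (.inl (C.plug F))
    | _, _, _ => none

/-!
A forest with fewer than `2 ^ (k + 1)` nodes is cut at threshold `m = 2 ^ k - 1`. Among the roots,
take the first tree whose size, together with those of the trees to its left, exceeds `m`; if more
than `m` nodes lie below its root, continue with the forest of its children. This exhibits the
forest as `C ⊙ (L ⊕ a⟨H⟩ ⊕ R)` where `C`, `L`, `H` and `R` all have at most `m` nodes. The hole of
`C` has no siblings, and such a context is cut along the path from its root to its hole, as
`C = C₁ ⊙ (L ⊕ a⟨□⟩ ⊕ R) ⊙ C₂` where `C₁` and `C₂` have at most `m` nodes. Here `L` and `R` need not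
shrink by a factor of two, but forests with fewer than `2 ^ (k + 1)` nodes have just been treated.
Writing `f k` and `c k` for the heights needed below `2 ^ k` nodes, this gives
`f (k + 1) ≤ max (f k + 4) (c k) + 1` and `c (k + 1) ≤ max (f (k + 1) + 3) (c k + 1) + 1`, whence
`f k ≤ 5 * k` and `c k ≤ 5 * k + 4`.
-/

attribute [local simp] FForest.append FForest.size FTree.size FCtx.vvOp FCtx.plug FCtx.box
  Formula.height Formula.numLeaves Formula.evalFree

section

variable {σ : Type}

namespace FForest

@[simp]
theorem append_nil : ∀ F : FForest σ, F.append .nil = F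
  | .nil => rfl
  | .cons t F => by simp [append_nil F]

@[simp]
theorem size_append : ∀ F G : FForest σ, (F.append G).size = F.size + G.size
  | .nil, G => by simp
  | .cons t F, G => by simp [size_append F G, add_assoc]

@[simp]
theorem size_eq_zero : ∀ {F : FForest σ}, F.size = 0 ↔ F = .nil
  | .nil => by simp
  | .cons (.node a H) F => by simp

end FForest

namespace FCtx

/-- The number of labeled nodes of a context; the hole is not counted. -/
@[simp]
def size : FCtx σ → ℕ
  | .hole L R => L.size + R.size
  | .node L _ C R => L.size + 1 + C.size + R.size

/-- The hole of the context has no siblings. Apart from `□` itself, these are exactly the contexts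
that formulas can denote, since the only atomic contexts are the `a_□`. -/
@[simp]
def HasLoneHole : FCtx σ → Prop
  | .hole L R => L = .nil ∧ R = .nil
  | .node _ _ C _ => C.HasLoneHole

theorem HasLoneHole.eq_box_of_size_eq_zero {C : FCtx σ} (hC : C.HasLoneHole) (h : C.size = 0) :
    C = box σ := by
  cases C <;> simp_all

theorem box_vvOp (C : FCtx σ) : (box σ).vvOp C = C := by
  cases C <;> simp [hvOp, vhOp]

theorem vvOp_box (C : FCtx σ) : C.vvOp (box σ) = C := by
  induction C <;> simp_all [hvOp, vhOp]

theorem box_plug (F : FForest σ) : (box σ).plug F = F := by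
  simp

@[simp]
theorem size_plug (C : FCtx σ) (F : FForest σ) : (C.plug F).size = C.size + F.size := by
  induction C <;> grind [plug, size, FForest.size, FTree.size, FForest.size_append]

@[simp]
theorem size_hvOp (F : FForest σ) (C : FCtx σ) : (hvOp F C).size = F.size + C.size := by
  cases C <;> grind [hvOp, size, FForest.size_append]

@[simp]
theorem size_vhOp (C : FCtx σ) (F : FForest σ) : (vhOp C F).size = C.size + F.size := by
  cases C <;> grind [vhOp, size, FForest.size_append]

@[simp]
theorem size_vvOp (C D : FCtx σ) : (C.vvOp D).size = C.size + D.size := by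
  induction C <;> grind [vvOp, size, size_hvOp, size_vhOp]

end FCtx

theorem Formula.numLeaves_eq_size_of_evalFree_eq {Ψ : Formula σ σ} {x : FForest σ ⊕ FCtx σ}
    (h : Ψ.evalFree = some x) : Ψ.numLeaves = x.elim FForest.size FCtx.size := by
  induction Ψ generalizing x with
  | fa a => cases h; simp
  | ca a => cases h; simp
  | node op l r ihl ihr =>
    simp only [Formula.evalFree] at h
    split at h <;> cases h <;> simp_all

theorem FForest.exists_eq_append_cons {F : FForest σ} {m : ℕ} (hm : m < F.size) :
    ∃ (L : FForest σ) (t : FTree σ) (R : FForest σ),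
      F = L.append (.cons t R) ∧ L.size ≤ m ∧ m < L.size + t.size := by
  match F with
  | .nil => simp at hm
  | .cons t F =>
    by_cases ht : m < t.size
    · exact ⟨.nil, t, F, by simp, by simp, by simpa⟩
    · obtain ⟨L, s, R, rfl, hL, hs⟩ := F.exists_eq_append_cons (m := m - t.size)
        (by grind [size])
      exact ⟨.cons t L, s, R, by simp, by grind [size], by grind [size]⟩

theorem FForest.exists_eq_plug {F : FForest σ} {m : ℕ} (hm : m < F.size) :
    ∃ (C : FCtx σ) (L : FForest σ) (a : σ) (H R : FForest σ), C.HasLoneHole ∧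
      F = C.plug (L.append (.cons (.node a H) R)) ∧
      L.size ≤ m ∧ H.size ≤ m ∧ m < L.size + (1 + H.size) := by
  obtain ⟨L, ⟨a, H⟩, R, rfl, hL, ht⟩ := F.exists_eq_append_cons hm
  by_cases hH : H.size ≤ m
  · exact ⟨.box σ, L, a, H, R, by simp, by simp, hL, hH, by simpa using ht⟩
  · obtain ⟨C, L', a', H', R', hC, rfl, hsizes⟩ := H.exists_eq_plug (not_le.mp hH)
    exact ⟨.node L a C R, L', a', H', R', hC, rfl, hsizes⟩
termination_by F.size
decreasing_by grind [size, size_append, FTree.size]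

theorem FCtx.HasLoneHole.exists_eq_vvOp {C : FCtx σ} (hC : C.HasLoneHole) {m : ℕ}
    (hm : m < C.size) :
    ∃ (C₁ : FCtx σ) (L : FForest σ) (a : σ) (C₂ : FCtx σ) (R : FForest σ),
      C₁.HasLoneHole ∧ C₂.HasLoneHole ∧ C = C₁.vvOp (.node L a C₂ R) ∧
      C₁.size ≤ m ∧ m < C₁.size + (L.size + 1 + R.size) := by
  induction C generalizing m with
  | hole L R => simp_all
  | node L a C R ih =>
    by_cases hroot : m < L.size + 1 + R.size
    · exact ⟨.box σ, L, a, C, R, by simp, hC, (box_vvOp _).symm, by simp, by simpa⟩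
    · obtain ⟨C₁, L', a', C₂, R', hC₁, hC₂, rfl, hle, hlt⟩ :=
        ih hC (m := m - (L.size + 1 + R.size)) (by grind [size])
      exact ⟨.node L a C₁ R, L', a', C₂, R', hC₁, hC₂, rfl, by grind [size], by grind [size]⟩

/-- `F` is empty or the value of a formula of height at most `h`. No formula denotes the empty
forest, but cutting a forest may leave empty pieces, which are simply omitted from the formula. -/
def FForest.HasFormula (F : FForest σ) (h : ℕ) : Prop :=
  F = .nil ∨ ∃ Ψ : Formula σ σ, Ψ.evalFree = some (.inl F) ∧ Ψ.height ≤ h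

/-- `C` is `□` or the value of a formula of height at most `h`; the counterpart for contexts of
`FForest.HasFormula`. -/
def FCtx.HasFormula (C : FCtx σ) (h : ℕ) : Prop :=
  C = .box σ ∨ ∃ Ψ : Formula σ σ, Ψ.evalFree = some (.inr C) ∧ Ψ.height ≤ h

variable {F G L R : FForest σ} {C D : FCtx σ} {h k : ℕ}

theorem FForest.HasFormula.mono (hF : F.HasFormula h) (hk : h ≤ k) : F.HasFormula k :=
  hF.imp_right fun ⟨Ψ, eval, height⟩ => ⟨Ψ, eval, height.trans hk⟩

theorem FCtx.HasFormula.mono (hC : C.HasFormula h) (hk : h ≤ k) : C.HasFormula k :=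
  hC.imp_right fun ⟨Ψ, eval, height⟩ => ⟨Ψ, eval, height.trans hk⟩

theorem FForest.HasFormula.append (hF : F.HasFormula h) (hG : G.HasFormula h) :
    (F.append G).HasFormula (h + 1) := by
  rcases hF with rfl | ⟨Ψ, evalΨ, heightΨ⟩
  · exact hG.mono h.le_succ
  rcases hG with rfl | ⟨Φ, evalΦ, heightΦ⟩
  · exact .inr ⟨Ψ, by simpa using evalΨ, by omega⟩
  · exact .inr ⟨.node .hh Ψ Φ, by simp [evalΨ, evalΦ], by grind [Formula.height]⟩

theorem FCtx.HasFormula.vvOp (hC : C.HasFormula h) (hD : D.HasFormula h) :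
    (C.vvOp D).HasFormula (h + 1) := by
  rcases hC with rfl | ⟨Ψ, evalΨ, heightΨ⟩
  · simpa only [box_vvOp] using hD.mono h.le_succ
  rcases hD with rfl | ⟨Φ, evalΦ, heightΦ⟩
  · exact .inr ⟨Ψ, by simpa only [vvOp_box] using evalΨ, by omega⟩
  · exact .inr ⟨.node .vv Ψ Φ, by simp [evalΨ, evalΦ], by grind [Formula.height]⟩

theorem FCtx.HasFormula.hvOp (hF : F.HasFormula h) (hC : C.HasFormula h) (hbox : C ≠ .box σ) :
    (hvOp F C).HasFormula (h + 1) := by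
  obtain ⟨Φ, evalΦ, heightΦ⟩ := hC.resolve_left hbox
  rcases hF with rfl | ⟨Ψ, evalΨ, heightΨ⟩
  · exact .inr ⟨Φ, by cases C <;> simpa [FCtx.hvOp] using evalΦ, by omega⟩
  · exact .inr ⟨.node .hv Ψ Φ, by simp [evalΨ, evalΦ], by grind [Formula.height]⟩

theorem FCtx.HasFormula.vhOp (hC : C.HasFormula h) (hF : F.HasFormula h) (hbox : C ≠ .box σ) :
    (vhOp C F).HasFormula (h + 1) := by
  obtain ⟨Φ, evalΦ, heightΦ⟩ := hC.resolve_left hbox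
  rcases hF with rfl | ⟨Ψ, evalΨ, heightΨ⟩
  · exact .inr ⟨Φ, by cases C <;> simpa [FCtx.vhOp] using evalΦ, by omega⟩
  · exact .inr ⟨.node .vh Φ Ψ, by simp [evalΨ, evalΦ], by grind [Formula.height]⟩

theorem FCtx.HasFormula.plug (hC : C.HasFormula h) (hF : F.HasFormula h) (hnil : F ≠ .nil) :
    (C.plug F).HasFormula (h + 1) := by
  obtain ⟨Φ, evalΦ, heightΦ⟩ := hF.resolve_left hnil
  rcases hC with rfl | ⟨Ψ, evalΨ, heightΨ⟩
  · exact .inr ⟨Φ, by simpa only [box_plug] using evalΦ, by omega⟩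
  · exact .inr ⟨.node .vhd Ψ Φ, by simp [evalΨ, evalΦ], by grind [Formula.height]⟩

theorem FCtx.hasFormula_node_box (a : σ) : (FCtx.node .nil a (.box σ) .nil).HasFormula 1 :=
  .inr ⟨.ca a, rfl, le_rfl⟩

theorem FForest.HasFormula.tree (a : σ) (hF : F.HasFormula h) (hh : 1 ≤ h) :
    (FForest.cons (.node a F) .nil).HasFormula (h + 1) := by
  by_cases hnil : F = .nil
  · exact .inr ⟨.fa a, by simp [hnil], by simp⟩
  · simpa using ((FCtx.hasFormula_node_box a).mono hh).plug hF hnil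

theorem FCtx.HasFormula.node (a : σ) (hL : L.HasFormula h) (hR : R.HasFormula h) (hh : 1 ≤ h)
    (hC : C.HasFormula (h + 2)) : (FCtx.node L a C R).HasFormula (h + 3) := by
  have vh : (FCtx.node .nil a (.box σ) R).HasFormula (h + 1) :=
    ((hasFormula_node_box a).mono hh).vhOp hR (by simp)
  have hv : (FCtx.node L a (.box σ) R).HasFormula (h + 2) := by
    simpa [FCtx.hvOp] using HasFormula.hvOp (hL.mono h.le_succ) vh (by simp)
  simpa only [FCtx.vvOp, box_vvOp] using hv.vvOp hC

theorem FForest.hasFormula_of_halves {m : ℕ}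
    (forests : ∀ G : FForest σ, G.size ≤ m → G.HasFormula h)
    (contexts : ∀ C : FCtx σ, C.HasLoneHole → C.size ≤ m → C.HasFormula (h + 4))
    (hF : F.size ≤ 2 * m + 1) : F.HasFormula (h + 5) := by
  rcases le_or_gt F.size m with hsmall | hm
  · exact (forests F hsmall).mono (by omega)
  obtain ⟨C, L, a, H, R, hC, rfl, hL, hH, hlt⟩ := F.exists_eq_plug hm
  simp only [FCtx.size_plug, size_append, size, FTree.size] at hF
  have tree : (FForest.cons (.node a H) .nil).HasFormula (h + 2) :=
    ((forests H hH).mono h.le_succ).tree a (by omega)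
  have treeR : (FForest.cons (.node a H) R).HasFormula (h + 3) :=
    tree.append ((forests R (by omega)).mono (by omega))
  have middle : (L.append (.cons (.node a H) R)).HasFormula (h + 4) :=
    ((forests L hL).mono (by omega)).append treeR
  exact (contexts C hC (by omega)).plug middle (by simp [← size_eq_zero])

theorem FCtx.HasLoneHole.hasFormula_of_halves {m : ℕ} (hC : C.HasLoneHole)
    (forests : ∀ G : FForest σ, G.size ≤ 2 * m + 1 → G.HasFormula h) (hh : 1 ≤ h)
    (contexts : ∀ D : FCtx σ, D.HasLoneHole → D.size ≤ m → D.HasFormula (h + 2))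
    (hsize : C.size ≤ 2 * m + 1) : C.HasFormula (h + 4) := by
  rcases le_or_gt C.size m with hsmall | hm
  · exact (contexts C hC hsmall).mono (by omega)
  obtain ⟨C₁, L, a, C₂, R, hC₁, hC₂, rfl, hle, hlt⟩ := hC.exists_eq_vvOp hm
  simp only [size_vvOp, size] at hsize
  have inner : (FCtx.node L a C₂ R).HasFormula (h + 3) :=
    .node a (forests L (by omega)) (forests R (by omega)) hh (contexts C₂ hC₂ (by omega))
  exact ((contexts C₁ hC₁ hle).mono (by omega)).vvOp inner

theorem hasFormula_of_size_lt_two_pow (k : ℕ) :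
    (∀ F : FForest σ, F.size < 2 ^ k → F.HasFormula (5 * k)) ∧
      ∀ C : FCtx σ, C.HasLoneHole → C.size < 2 ^ k → C.HasFormula (5 * k + 4) := by
  induction k with
  | zero =>
    exact ⟨fun F hF => .inl (FForest.size_eq_zero.mp (by simpa using hF)),
      fun C hC hsize => .inl (hC.eq_box_of_size_eq_zero (by simpa using hsize))⟩
  | succ k ih =>
    obtain ⟨m, hm⟩ : ∃ m, 2 ^ k = m + 1 := Nat.exists_eq_add_one.mpr (by positivity)
    simp only [pow_succ, hm, Nat.lt_succ_iff] at ih ⊢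
    have forests (F : FForest σ) (hF : F.size ≤ 2 * m + 1) : F.HasFormula (5 * (k + 1)) :=
      F.hasFormula_of_halves ih.1 ih.2 hF
    refine ⟨fun F hF => forests F (by omega), fun C hC hsize => ?_⟩
    exact hC.hasFormula_of_halves forests (by omega)
      (fun D hD hsize => (ih.2 D hD hsize).mono (by omega)) (by omega)

theorem FForest.exists_formula_height_le (hF : F ≠ .nil) :
    ∃ Ψ : Formula σ σ, Ψ.evalFree = some (.inl F) ∧ Ψ.height ≤ 5 * (Nat.log 2 F.size + 1) :=
  ((hasFormula_of_size_lt_two_pow _).1 F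
    (Nat.lt_pow_succ_log_self Nat.one_lt_two _)).resolve_left hF

end

theorem exists_balanced_formula_general {σ : Type} (F : FForest σ) (h2 : 2 ≤ F.size) :
    ∃ Ψ : Formula σ σ,
      Ψ.evalFree = some (.inl F) ∧
      Ψ.numLeaves = F.size ∧
      (Ψ.height : ℝ) ≤ 10 * Real.logb 2 (F.size : ℝ) := by
  have hF : F ≠ .nil := by rintro rfl; simp at h2
  obtain ⟨Ψ, eval, height⟩ := FForest.exists_formula_height_le hF
  refine ⟨Ψ, eval, Formula.numLeaves_eq_size_of_evalFree_eq eval, ?_⟩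
  have hlog : 1 ≤ Nat.log 2 F.size := Nat.log_pos Nat.one_lt_two h2
  calc (Ψ.height : ℝ) ≤ 10 * Nat.log 2 F.size := by exact_mod_cast height.trans (by omega)
    _ ≤ 10 * Real.logb 2 F.size := by
      gcongr
      exact_mod_cast Real.natLog_le_logb F.size 2

/-- For every `σ`-labeled rooted ordered unranked tree `T`
with `n ≥ 2` nodes there exists a forest-algebra formula `Ψ` over `σ` that
evaluates to `T`, has exactly `n` leaves, and whose parse tree has height at
most `10·log₂ n`. -/
theorem exists_balanced_formula {σ : Type} [Fintype σ]
    (T : FTree σ) (h2 : 2 ≤ T.size) :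
    ∃ Ψ : Formula σ σ,
      Ψ.evalFree = some (.inl (.cons T .nil)) ∧
      Ψ.numLeaves = T.size ∧
      (Ψ.height : ℝ) ≤ 10 * Real.logb 2 (T.size : ℝ) := by
  simpa using exists_balanced_formula_general (.cons T .nil) (by simpa)
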